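/- arXiv:math/0005188 — 3 statements merged into one kernel-verified Lean document; each statement's English description precedes it below -/
import Mathlib

section
/- Let U ⊆ E be open, let φ : E → ℝ satisfy ContDiffOn ℝ 2 φ U, and let ψ be a test function on U. Then integration by parts holds: ∫ x in U, ⟪∇φ x, ∇ψ x⟫ = − ∫ x in U, ψ x * Δφ x. -/
open MeasureTheory RealInnerProductSpace

/-- The product of a function continuous on an open set `U` with a continuous function compactly
supported in `U` is integrable. -/
lemma ContinuousOn.integrable_mul_of_tsupport_subset {X : Type*} [TopologicalSpace X]
    [MeasurableSpace X] [OpensMeasurableSpace X] {μ : Measure X} [IsFiniteMeasureOnCompacts μ]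
    {U : Set X} (hU : IsOpen U) {f g : X → ℝ} (hf : ContinuousOn f U) (hg : Continuous g)
    (hgc : HasCompactSupport g) (hgU : tsupport g ⊆ U) :
    Integrable (fun x => f x * g x) μ := by
  refine Continuous.integrable_of_hasCompactSupport (continuous_of_tsupport fun x hx => ?_)
    hgc.mul_left
  have hxU : x ∈ U := hgU (tsupport_mul_subset_right hx)
  exact (hf.continuousAt (hU.mem_nhds hxU)).mul hg.continuousAt

lemma EuclideanSpace.inner_gradient_eq_sum_fderiv {n : ℕ} (f g : EuclideanSpace ℝ (Fin n) → ℝ)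
    (x : EuclideanSpace ℝ (Fin n)) :
    ⟪gradient f x, gradient g x⟫ = ∑ i : Fin n,
      fderiv ℝ f x (EuclideanSpace.single i (1:ℝ)) *
        fderiv ℝ g x (EuclideanSpace.single i (1:ℝ)) := by
  have key (h : EuclideanSpace ℝ (Fin n) → ℝ) (v) : ⟪gradient h x, v⟫ = fderiv ℝ h x v := by
    simp [gradient]
  rw [← (EuclideanSpace.basisFun (Fin n) ℝ).sum_inner_mul_inner]
  refine Finset.sum_congr rfl fun i _ => ?_
  rw [EuclideanSpace.basisFun_apply, key, real_inner_comm, key]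

theorem stmt_11 (n : ℕ) (hn : 1 ≤ n) (U : Set (EuclideanSpace ℝ (Fin n))) (hU : IsOpen U)
    (φ : EuclideanSpace ℝ (Fin n) → ℝ) (hφ : ContDiffOn ℝ 2 φ U)
    (ψ : EuclideanSpace ℝ (Fin n) → ℝ) (hψ : ContDiff ℝ (⊤ : ℕ∞) ψ)
    (hψc : HasCompactSupport ψ) (hψU : tsupport ψ ⊆ U) :
    ∫ x in U, ⟪gradient φ x, gradient ψ x⟫ =
      -∫ x in U, ψ x * (∑ i : Fin n,
        fderiv ℝ (fun y => fderiv ℝ φ y (EuclideanSpace.single i (1:ℝ))) x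
          (EuclideanSpace.single i (1:ℝ))) := by
  have hsupp (v) : tsupport (fun x => fderiv ℝ ψ x v) ⊆ tsupport ψ :=
    tsupport_fderiv_apply_subset ℝ v
  have hφ' (v) : ContDiffOn ℝ 1 (fun y => fderiv ℝ φ y v) U :=
    (hφ.fderiv_of_isOpen hU (by norm_num)).clm_apply contDiffOn_const
  have hφ'' (v) : ContinuousOn (fun x => fderiv ℝ (fun y => fderiv ℝ φ y v) x v) U :=
    ((hφ' v).continuousOn_fderiv_of_isOpen hU le_rfl).clm_apply continuousOn_const
  have hψ' (v) : Continuous (fun x => fderiv ℝ ψ x v) :=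
    (hψ.continuous_fderiv (by simp)).clm_apply continuous_const
  have hint_left (v) : Integrable (fun x => fderiv ℝ φ x v * fderiv ℝ ψ x v) :=
    (hφ' v).continuousOn.integrable_mul_of_tsupport_subset hU (hψ' v)
      (hψc.fderiv_apply ℝ v) ((hsupp v).trans hψU)
  have hint_right (v) : Integrable (fun x => fderiv ℝ (fun y => fderiv ℝ φ y v) x v * ψ x) :=
    (hφ'' v).integrable_mul_of_tsupport_subset hU hψ.continuous hψc hψU
  have hparts (v) : ∫ x, fderiv ℝ φ x v * fderiv ℝ ψ x v =
      -∫ x, fderiv ℝ (fun y => fderiv ℝ φ y v) x v * ψ x :=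
    integral_mul_fderiv_eq_neg_fderiv_mul_of_integrable (hint_right v) (hint_left v)
      ((hφ' v).continuousOn.integrable_mul_of_tsupport_subset hU hψ.continuous hψc hψU)
      (fun x hx => ((hφ' v).differentiableOn one_ne_zero).differentiableAt
        (hU.mem_nhds (hψU hx)))
      (fun x _ => hψ.differentiable (by simp) x)
  simp only [EuclideanSpace.inner_gradient_eq_sum_fderiv]
  rw [setIntegral_eq_integral_of_forall_compl_eq_zero,
    setIntegral_eq_integral_of_forall_compl_eq_zero,
    integral_finsetSum _ fun i _ => hint_left _]
  · simp only [hparts, mul_comm (ψ _), Finset.sum_mul]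
    rw [integral_finsetSum _ fun i _ => hint_right _, Finset.sum_neg_distrib]
  · intro x hx
    rw [image_eq_zero_of_notMem_tsupport fun h => hx (hψU h), zero_mul]
  · intro x hx
    refine Finset.sum_eq_zero fun i _ => ?_
    rw [image_eq_zero_of_notMem_tsupport (f := fun x => fderiv ℝ ψ x (EuclideanSpace.single i 1))
      fun h => hx (hψU (hsupp _ h)), mul_zero]
end

section
/- Let U ⊆ E be open, let φ : E → ℝ satisfy ContDiffOn ℝ 1 φ U, let ψ be a test function on U, set K := tsupport ψ, and assume ∇φ x ≠ 0 for every x ∈ K. Then the total-norm functional along the variation φ + tψ is differentiable in t at 0 with first variation HasDerivAt (fun t : ℝ => ∫ x in K, ‖∇φ x + t • ∇ψ x‖) (∫ x in K, ⟪∇φ x, ∇ψ x⟫ / ‖∇φ x‖) 0. -/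
open MeasureTheory RealInnerProductSpace

/-- The derivative of `t ↦ ‖a + t • b‖` at `0`, for `a ≠ 0`. -/
theorem hasDerivAt_norm_add_smul_zero {F : Type*} [NormedAddCommGroup F] [InnerProductSpace ℝ F]
    {a : F} (ha : a ≠ 0) (b : F) :
    HasDerivAt (fun t : ℝ => ‖a + t • b‖) (⟪a, b⟫ / ‖a‖) 0 := by
  have hline : HasDerivAt (fun t : ℝ => a + t • b) b 0 := by
    simpa using ((hasDerivAt_id (0 : ℝ)).smul_const b).const_add a
  have hsqrt := hline.norm_sq.sqrt (by simpa using ha)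
  simp only [Real.sqrt_sq (norm_nonneg _), zero_smul, add_zero] at hsqrt
  rwa [mul_div_mul_left _ _ two_ne_zero] at hsqrt

/-- The function `t ↦ ‖a + t • b‖` is Lipschitz with constant `‖b‖`. -/
theorem lipschitzWith_norm_add_smul {F : Type*} [NormedAddCommGroup F] [NormedSpace ℝ F]
    (a b : F) : LipschitzWith ‖b‖₊ (fun t : ℝ => ‖a + t • b‖) := by
  refine LipschitzWith.of_dist_le_mul fun s t => ?_
  calc dist ‖a + s • b‖ ‖a + t • b‖ ≤ ‖(a + s • b) - (a + t • b)‖ := abs_norm_sub_norm_le _ _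
    _ = ‖b‖ * dist s t := by
      rw [add_sub_add_left_eq_sub, ← sub_smul, norm_smul, mul_comm, Real.dist_eq, Real.norm_eq_abs]

/-- The gradient of a `C¹` function on an open set is continuous there. -/
theorem ContDiffOn.continuousOn_gradient {F : Type*} [NormedAddCommGroup F]
    [InnerProductSpace ℝ F] [CompleteSpace F] {f : F → ℝ} {U : Set F}
    (hf : ContDiffOn ℝ 1 f U) (hU : IsOpen U) : ContinuousOn (gradient f) U :=
  (InnerProductSpace.toDual ℝ F).symm.continuous.comp_continuousOn
    (hf.continuousOn_fderiv_of_isOpen hU le_rfl)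

theorem stmt_12 (n : ℕ) (hn : 1 ≤ n) (U : Set (EuclideanSpace ℝ (Fin n))) (hU : IsOpen U)
    (φ : EuclideanSpace ℝ (Fin n) → ℝ) (hφ : ContDiffOn ℝ 1 φ U)
    (ψ : EuclideanSpace ℝ (Fin n) → ℝ) (hψ : ContDiff ℝ (⊤ : ℕ∞) ψ)
    (hψc : HasCompactSupport ψ) (hψU : tsupport ψ ⊆ U)
    (hgrad : ∀ x ∈ tsupport ψ, gradient φ x ≠ 0) :
    HasDerivAt (fun t : ℝ => ∫ x in tsupport ψ, ‖gradient φ x + t • gradient ψ x‖)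
      (∫ x in tsupport ψ, ⟪gradient φ x, gradient ψ x⟫ / ‖gradient φ x‖) 0 := by
  have hK : IsCompact (tsupport ψ) := hψc
  have hKm : MeasurableSet (tsupport ψ) := hK.measurableSet
  have hφK : ContinuousOn (gradient φ) (tsupport ψ) := (hφ.continuousOn_gradient hU).mono hψU
  have hψK : ContinuousOn (gradient ψ) (tsupport ψ) :=
    ((hψ.of_le (by exact_mod_cast le_top)).contDiffOn.continuousOn_gradient isOpen_univ).mono
      (Set.subset_univ _)
  have hF (t : ℝ) : ContinuousOn (fun x => ‖gradient φ x + t • gradient ψ x‖) (tsupport ψ) :=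
    (hφK.add (hψK.const_smul t)).norm
  refine (hasDerivAt_integral_of_dominated_loc_of_lip (s := Set.univ)
    (bound := fun x => ‖gradient ψ x‖) Filter.univ_mem
    (.of_forall fun t => (hF t).aestronglyMeasurable hKm)
    ((hF 0).integrableOn_compact hK) ?_ (.of_forall fun x => ?_)
    (hψK.norm.integrableOn_compact hK) ?_).2
  · exact ((hφK.inner hψK).div hφK.norm fun x hx =>
      norm_ne_zero_iff.2 (hgrad x hx)).aestronglyMeasurable hKm
  · simpa using lipschitzWith_norm_add_smul (gradient φ x) (gradient ψ x)
  · exact (ae_restrict_iff' hKm).2 (.of_forall fun x hx =>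
      hasDerivAt_norm_add_smul_zero (hgrad x hx) (gradient ψ x))
end

section
/- Let U ⊆ E be open, let m ≥ 1, and let u : E → EuclideanSpace ℝ (Fin m) satisfy ContDiffOn ℝ 2 u U, with components u_j x := ⟪u x, f j⟫. Then the following are equivalent: (i) for every Ψ : E → EuclideanSpace ℝ (Fin m) with ContDiff ℝ ∞ Ψ, HasCompactSupport Ψ and tsupport Ψ ⊆ U, one has ∫ x in U, ∑ j, ⟪∇(fun y => u_j y) x, ∇(fun y => ⟪Ψ y, f j⟫) x⟫ = 0; (ii) every component is harmonic on U, i.e. for every j : Fin m and every x ∈ U, Δ(fun y => u_j y) x = 0. -/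
open MeasureTheory RealInnerProductSpace

section WeakHarmonic

variable {n : ℕ}

lemma inner_gradient_eq_sum_fderiv_mul (v w : EuclideanSpace ℝ (Fin n) → ℝ)
    (x : EuclideanSpace ℝ (Fin n)) :
    ⟪gradient v x, gradient w x⟫ =
      ∑ i : Fin n, fderiv ℝ v x (EuclideanSpace.single i (1 : ℝ)) *
        fderiv ℝ w x (EuclideanSpace.single i (1 : ℝ)) := by
  rw [← (EuclideanSpace.basisFun (Fin n) ℝ).sum_inner_mul_inner]
  refine Finset.sum_congr rfl fun i _ => ?_
  rw [real_inner_comm (gradient w x), EuclideanSpace.basisFun_apply]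
  simp only [gradient, InnerProductSpace.toDual_symm_apply]

lemma integrable_mul_of_continuousOn_of_tsupport_subset {U : Set (EuclideanSpace ℝ (Fin n))}
    (hU : IsOpen U) {f g : EuclideanSpace ℝ (Fin n) → ℝ} (hf : ContinuousOn f U)
    (hg : Continuous g) (hgc : HasCompactSupport g) (hgU : tsupport g ⊆ U) :
    Integrable fun x => f x * g x :=
  Continuous.integrable_of_hasCompactSupport
    ((hf.mul hg.continuousOn).continuous_of_tsupport_subset hU
      ((tsupport_mul_subset_right (f := f) (g := g)).trans hgU))
    (hgc.mul_left (f := f))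

lemma ContDiffOn.fderiv_apply_of_isOpen {U : Set (EuclideanSpace ℝ (Fin n))} (hU : IsOpen U)
    {w : EuclideanSpace ℝ (Fin n) → ℝ} {k l : WithTop ℕ∞} (hw : ContDiffOn ℝ k w U)
    (hlk : l + 1 ≤ k) (v : EuclideanSpace ℝ (Fin n)) :
    ContDiffOn ℝ l (fun y => fderiv ℝ w y v) U :=
  (hw.fderiv_of_isOpen hU hlk).clm_apply contDiffOn_const

lemma continuousOn_fderiv_fderiv_apply {U : Set (EuclideanSpace ℝ (Fin n))} (hU : IsOpen U)
    {w : EuclideanSpace ℝ (Fin n) → ℝ} (hw : ContDiffOn ℝ 2 w U)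
    (v : EuclideanSpace ℝ (Fin n)) :
    ContinuousOn (fun x => fderiv ℝ (fun y => fderiv ℝ w y v) x v) U :=
  ((hw.fderiv_apply_of_isOpen hU (l := 1) (by norm_num) v).fderiv_apply_of_isOpen hU (l := 0)
    (by norm_num) v).continuousOn

lemma integrable_inner_gradient {U : Set (EuclideanSpace ℝ (Fin n))} (hU : IsOpen U)
    {w φ : EuclideanSpace ℝ (Fin n) → ℝ} (hw : ContDiffOn ℝ 1 w U)
    (hφ : ContDiff ℝ 1 φ) (hφc : HasCompactSupport φ) (hφU : tsupport φ ⊆ U) :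
    Integrable fun x => ⟪gradient w x, gradient φ x⟫ := by
  simp only [inner_gradient_eq_sum_fderiv_mul]
  exact integrable_finsetSum _ fun i _ => integrable_mul_of_continuousOn_of_tsupport_subset hU
    (hw.fderiv_apply_of_isOpen hU (l := 0) (by norm_num) _).continuousOn
    ((hφ.continuous_fderiv one_ne_zero).clm_apply continuous_const)
    (hφc.fderiv_apply ℝ _) ((tsupport_fderiv_apply_subset ℝ _).trans hφU)

/-- Green's first identity against a compactly supported test function. -/
lemma setIntegral_inner_gradient_eq_neg {U : Set (EuclideanSpace ℝ (Fin n))} (hU : IsOpen U)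
    {w φ : EuclideanSpace ℝ (Fin n) → ℝ} (hw : ContDiffOn ℝ 2 w U)
    (hφ : ContDiff ℝ 1 φ) (hφc : HasCompactSupport φ) (hφU : tsupport φ ⊆ U) :
    ∫ x in U, ⟪gradient w x, gradient φ x⟫ =
      -∫ x, φ x • ∑ i : Fin n, fderiv ℝ (fun y => fderiv ℝ w y (EuclideanSpace.single i (1 : ℝ))) x
        (EuclideanSpace.single i (1 : ℝ)) := by
  rw [setIntegral_eq_integral_of_forall_compl_eq_zero fun x hx => by
    rw [inner_gradient_eq_sum_fderiv_mul, fderiv_of_notMem_tsupport ℝ fun h => hx (hφU h)]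
    simp]
  have hdw (i : Fin n) := hw.fderiv_apply_of_isOpen hU (l := 1) (by norm_num)
    (EuclideanSpace.single i (1 : ℝ))
  have hdφ (i : Fin n) : Integrable fun x =>
      fderiv ℝ w x (EuclideanSpace.single i (1 : ℝ)) *
        fderiv ℝ φ x (EuclideanSpace.single i (1 : ℝ)) :=
    integrable_mul_of_continuousOn_of_tsupport_subset hU (hdw i).continuousOn
      ((hφ.continuous_fderiv one_ne_zero).clm_apply continuous_const)
      (hφc.fderiv_apply ℝ _) ((tsupport_fderiv_apply_subset ℝ _).trans hφU)
  have hddw (i : Fin n) : Integrable fun x =>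
      fderiv ℝ (fun y => fderiv ℝ w y (EuclideanSpace.single i (1 : ℝ))) x
        (EuclideanSpace.single i (1 : ℝ)) * φ x :=
    integrable_mul_of_continuousOn_of_tsupport_subset hU
      (continuousOn_fderiv_fderiv_apply hU hw _) hφ.continuous hφc hφU
  simp only [inner_gradient_eq_sum_fderiv_mul, smul_eq_mul, mul_comm (φ _), Finset.sum_mul]
  rw [integral_finsetSum _ fun i _ => hdφ i, integral_finsetSum _ fun i _ => hddw i,
    ← Finset.sum_neg_distrib]
  refine Finset.sum_congr rfl fun i _ => ?_
  exact integral_mul_fderiv_eq_neg_fderiv_mul_of_integrable (hddw i) (hdφ i)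
    (integrable_mul_of_continuousOn_of_tsupport_subset hU (hdw i).continuousOn
      hφ.continuous hφc hφU)
    (fun x hx => ((hdw i).differentiableOn one_ne_zero).differentiableAt (hU.mem_nhds (hφU hx)))
    (fun x _ => hφ.differentiable one_ne_zero x)

end WeakHarmonic

theorem stmt_14 (n m : ℕ) (hn : 1 ≤ n) (hm : 1 ≤ m)
    (U : Set (EuclideanSpace ℝ (Fin n))) (hU : IsOpen U)
    (u : EuclideanSpace ℝ (Fin n) → EuclideanSpace ℝ (Fin m))
    (hu : ContDiffOn ℝ 2 u U) :
    (∀ Ψ : EuclideanSpace ℝ (Fin n) → EuclideanSpace ℝ (Fin m),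
        ContDiff ℝ (⊤ : ℕ∞) Ψ → HasCompactSupport Ψ → tsupport Ψ ⊆ U →
        ∫ x in U, ∑ j : Fin m,
          ⟪gradient (fun y => ⟪u y, EuclideanSpace.single j (1:ℝ)⟫) x,
            gradient (fun y => ⟪Ψ y, EuclideanSpace.single j (1:ℝ)⟫) x⟫ = 0) ↔
      (∀ j : Fin m, ∀ x ∈ U, (∑ i : Fin n,
          fderiv ℝ (fun y =>
              fderiv ℝ (fun z => ⟪u z, EuclideanSpace.single j (1:ℝ)⟫) y
                (EuclideanSpace.single i (1:ℝ))) x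
            (EuclideanSpace.single i (1:ℝ))) = 0) := by
  have hcomp (j : Fin m) : ContDiffOn ℝ 2 (fun y => ⟪u y, EuclideanSpace.single j (1:ℝ)⟫) U :=
    hu.inner ℝ contDiffOn_const
  constructor
  · intro h j
    have hcont : ContinuousOn (fun x => ∑ i : Fin n,
        fderiv ℝ (fun y => fderiv ℝ (fun z => ⟪u z, EuclideanSpace.single j (1:ℝ)⟫) y
          (EuclideanSpace.single i (1:ℝ))) x (EuclideanSpace.single i (1:ℝ))) U :=
      continuousOn_finsetSum _ fun i _ => continuousOn_fderiv_fderiv_apply hU (hcomp j) _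
    have hae := hU.ae_eq_zero_of_integral_contDiff_smul_eq_zero
      (hcont.locallyIntegrableOn (μ := volume) hU.measurableSet) fun g hg hgc hgU => by
        have key := h (fun x => g x • EuclideanSpace.single j (1:ℝ))
          (hg.smul contDiff_const) hgc.smul_right
          ((tsupport_smul_subset_left g _).trans hgU)
        have hcoord (k : Fin m) : (fun y => ⟪g y • EuclideanSpace.single j (1:ℝ),
            EuclideanSpace.single k (1:ℝ)⟫) = if k = j then g else 0 := by
          ext y
          rw [real_inner_smul_left, EuclideanSpace.inner_single_right]
          split_ifs with hk <;> simp [hk]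
        have hsum (x : EuclideanSpace ℝ (Fin n)) : ∑ k : Fin m,
            ⟪gradient (fun y => ⟪u y, EuclideanSpace.single k (1:ℝ)⟫) x,
              gradient (fun y => ⟪g y • EuclideanSpace.single j (1:ℝ),
                EuclideanSpace.single k (1:ℝ)⟫) x⟫ =
            ⟪gradient (fun y => ⟪u y, EuclideanSpace.single j (1:ℝ)⟫) x, gradient g x⟫ := by
          rw [Finset.sum_eq_single j _ (by simp)]
          · rw [hcoord, if_pos rfl]
          · intro k _ hk
            rw [hcoord, if_neg hk, inner_gradient_eq_sum_fderiv_mul]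
            simp
        simp only [hsum] at key
        rw [setIntegral_inner_gradient_eq_neg hU (hcomp j) (hg.of_le (by simp)) hgc hgU] at key
        exact neg_eq_zero.mp key
    exact Measure.eqOn_open_of_ae_eq ((ae_restrict_iff' hU.measurableSet).2 hae) hU hcont
      continuousOn_const
  · intro h Ψ hΨ hΨc hΨU
    have hΨ1 (j : Fin m) : ContDiff ℝ 1 (fun y => ⟪Ψ y, EuclideanSpace.single j (1:ℝ)⟫) :=
      (hΨ.of_le (by simp)).inner ℝ contDiff_const
    have hsub (j : Fin m) : tsupport (fun y => ⟪Ψ y, EuclideanSpace.single j (1:ℝ)⟫) ⊆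
        tsupport Ψ :=
      tsupport_comp_subset (g := fun v => ⟪v, EuclideanSpace.single j (1:ℝ)⟫)
        (inner_zero_left _) Ψ
    have hc (j : Fin m) : HasCompactSupport (fun y => ⟪Ψ y, EuclideanSpace.single j (1:ℝ)⟫) :=
      hΨc.of_isClosed_subset (isClosed_tsupport _) (hsub j)
    rw [integral_finsetSum _ fun j _ => (integrable_inner_gradient hU
      ((hcomp j).of_le (by norm_num)) (hΨ1 j) (hc j) ((hsub j).trans hΨU)).integrableOn]
    refine Finset.sum_eq_zero fun j _ => ?_
    rw [setIntegral_inner_gradient_eq_neg hU (hcomp j) (hΨ1 j) (hc j) ((hsub j).trans hΨU),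
      neg_eq_zero]
    refine integral_eq_zero_of_ae (.of_forall fun x => ?_)
    by_cases hx : x ∈ U
    · simp only [h j x hx, smul_zero, Pi.zero_apply]
    · beta_reduce
      rw [image_eq_zero_of_notMem_tsupport fun hx' => hx (hΨU (hsub j hx')), zero_smul,
        Pi.zero_apply]
end
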